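/- Let Λ be a unimodular lattice in ℝ^d with dual Λ*, and f(τ) = |τ|_+. Then for every k ∈ {1,…,d}: ψ̲_k(Λ,f) and ψ̄_{d+1−k}(Λ*,f) are either both zero or have opposite signs, and likewise ψ̄_k(Λ,f) and ψ̲_{d+1−k}(Λ*,f); moreover |ψ̲_k(Λ,f)| ≤ (d−1)·|ψ̄_{d+1−k}(Λ*,f)| and |ψ̄_k(Λ,f)| ≤ (d−1)·|ψ̲_{d+1−k}(Λ*,f)|. -/

import Mathlib

open Filter

noncomputable section

/-- A unimodular lattice in `ℝ^d`: the set of integer linear combinations of a basis of `ℝ^d`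
whose matrix has determinant `±1`. -/
def IsUnimodularLattice (d : ℕ) (Λ : Set (Fin d → ℝ)) : Prop :=
  ∃ B : Matrix (Fin d) (Fin d) ℝ, |B.det| = 1 ∧
    Λ = {v | ∃ x : Fin d → ℤ, v = B.mulVec fun i => (x i : ℝ)}

/-- The dual lattice `Λ* = {w : ⟨w, z⟩ ∈ ℤ for all z ∈ Λ}`. -/
def dualLattice (d : ℕ) (Λ : Set (Fin d → ℝ)) : Set (Fin d → ℝ) :=
  {w | ∀ z ∈ Λ, ∃ c : ℤ, ∑ i, w i * z i = (c : ℝ)}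

/-- The `k`-th successive minimum `λ_k(B_τ, Λ)` of the box
`B_τ = {z : |z_i| ≤ exp (τ i)}` with respect to the lattice `Λ`. -/
def succMin (d : ℕ) (Λ : Set (Fin d → ℝ)) (τ : Fin d → ℝ) (k : ℕ) : ℝ :=
  sInf {lam : ℝ | 0 < lam ∧ ∃ v : Fin k → (Fin d → ℝ),
    (∀ l, v l ∈ Λ) ∧ LinearIndependent ℝ v ∧ ∀ l i, |v l i| ≤ lam * Real.exp (τ i)}

/-- `L_k(Λ, τ) = log λ_k(B_τ, Λ)`. -/
def Lk (d : ℕ) (Λ : Set (Fin d → ℝ)) (τ : Fin d → ℝ) (k : ℕ) : ℝ :=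
  Real.log (succMin d Λ τ k)

/-- The filter on `ℝ^d` of `τ ∈ T` (i.e. `∑ τ_i = 0`) with `|τ| = max_i |τ_i| → ∞`. -/
def Tfilter (d : ℕ) : Filter (Fin d → ℝ) :=
  (Filter.atTop.comap fun τ : Fin d → ℝ => ⨆ i, |τ i|) ⊓
    Filter.principal {τ | ∑ i, τ i = 0}

/-- `ψ̲_k(Λ, f)` for `f(τ) = |τ|_+ = max_i τ_i`: the liminf of `L_k(Λ,τ)/|τ|_+` over
`τ ∈ T` with `|τ| → ∞`. -/
def psiLowF (d : ℕ) (Λ : Set (Fin d → ℝ)) (k : ℕ) : ℝ :=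
  liminf (fun τ : Fin d → ℝ => Lk d Λ τ k / ⨆ i, τ i) (Tfilter d)

/-- `ψ̄_k(Λ, f)` for `f(τ) = |τ|_+ = max_i τ_i`: the limsup of `L_k(Λ,τ)/|τ|_+` over
`τ ∈ T` with `|τ| → ∞`. -/
def psiUpF (d : ℕ) (Λ : Set (Fin d → ℝ)) (k : ℕ) : ℝ :=
  limsup (fun τ : Fin d → ℝ => Lk d Λ τ k / ⨆ i, τ i) (Tfilter d)


lemma mink (d : ℕ) (A : Matrix (Fin d) (Fin d) ℝ) (hA : A.det ≠ 0) (t : ℝ) (ht : 0 < t)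
    (h : ∀ x : Fin d → ℤ, x ≠ 0 → ∃ i, t ≤ |A.mulVec (fun i => (x i : ℝ)) i|) :
    t ^ d ≤ |A.det| := by
  by_contra hlt
  push Not at hlt
  set s : Set (Fin d → ℝ) := (Matrix.toLin' A) ⁻¹' (Set.pi Set.univ fun _ => Set.Ioo (-t) t) with hs
  have hdet : LinearMap.det (Matrix.toLin' A) = A.det := LinearMap.det_toLin' A
  have hvol : MeasureTheory.volume s = ENNReal.ofReal |A.det⁻¹| * ENNReal.ofReal ((2 * t) ^ d) := by
    rw [hs, MeasureTheory.Measure.addHaar_preimage_linearMap _ (by rwa [hdet]), hdet,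
      Real.volume_pi_Ioo]
    congr 1
    rw [Finset.prod_const, ← ENNReal.ofReal_pow (by linarith)]
    simp only [Finset.card_univ, Fintype.card_fin]
    congr 2
    ring
  have hsymm : ∀ x ∈ s, -x ∈ s := by
    intro x hx
    simp only [hs, Set.mem_preimage, Set.mem_pi, Set.mem_univ, true_imp_iff, Set.mem_Ioo, map_neg, Pi.neg_apply] at hx ⊢
    intro i
    constructor <;> linarith [(hx i).1, (hx i).2]
  have hconv : Convex ℝ s := by
    apply Convex.linear_preimage
    exact convex_pi fun i _ => convex_Ioo _ _
  have hc : Countable (Submodule.span ℤ (Set.range (Pi.basisFun ℝ (Fin d)))) := inferInstance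
  have hc' : Countable (Submodule.span ℤ (Set.range (Pi.basisFun ℝ (Fin d)))).toAddSubgroup := hc
  have hfd : MeasureTheory.volume (ZSpan.fundamentalDomain (Pi.basisFun ℝ (Fin d))) = 1 := by
    rw [ZSpan.volume_fundamentalDomain]
    have : Matrix.of (Pi.basisFun ℝ (Fin d)) = 1 := by
      ext i j
      simp [Matrix.one_apply, Pi.single_apply, eq_comm]
    rw [this]
    simp
  have key := MeasureTheory.exists_ne_zero_mem_lattice_of_measure_mul_two_pow_lt_measure
    (L := (Submodule.span ℤ (Set.range (Pi.basisFun ℝ (Fin d)))).toAddSubgroup)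
    (ZSpan.isAddFundamentalDomain (Pi.basisFun ℝ (Fin d)) MeasureTheory.volume)
    hsymm hconv (by
      rw [hfd, hvol, one_mul, ← ENNReal.ofReal_mul (abs_nonneg _)]
      rw [Module.finrank_fin_fun, ← ENNReal.ofReal_ofNat, ← ENNReal.ofReal_pow (by norm_num)]
      rw [ENNReal.ofReal_lt_ofReal_iff_of_nonneg (by positivity), mul_pow, abs_inv]
      have : 0 < |A.det| := abs_pos.mpr hA
      rw [inv_mul_eq_div, lt_div_iff₀ this]
      have : (0:ℝ) < 2 ^ d := by positivity
      nlinarith)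
  obtain ⟨⟨x, hxL⟩, hx0, hxs⟩ := key
  have hxL' : x ∈ Submodule.span ℤ (Set.range (Pi.basisFun ℝ (Fin d))) := hxL
  rw [Module.Basis.mem_span_iff_repr_mem] at hxL'
  choose y hy using hxL'
  have hxy : x = fun i => (y i : ℝ) := by
    funext i
    simpa using (hy i).symm
  have hy0 : y ≠ 0 := by
    rintro rfl
    apply hx0
    ext i
    simp [hxy]
  obtain ⟨i, hi⟩ := h y hy0
  have h2 : x ∈ s := hxs
  simp only [hs, Set.mem_preimage, Set.mem_pi, Set.mem_univ, true_imp_iff, Set.mem_Ioo, Matrix.toLin'_apply] at h2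
  have h3 := abs_lt.mpr (h2 i)
  rw [hxy] at h3
  linarith

lemma greedy {E : Type*} [NormedAddCommGroup E] [NormedSpace ℝ E] [FiniteDimensional ℝ E]
    (M : Set E) (δ : ℝ) (hδ : 0 < δ) (hM : ∀ x ∈ M, x ≠ 0 → δ ≤ ‖x‖)
    (hspan : Submodule.span ℝ M = ⊤) :
    ∃ v : ℕ → E, ∀ n < Module.finrank ℝ E, v n ∈ M ∧ v n ∉ Submodule.span ℝ (v '' Set.Iio n) ∧
      ∀ x ∈ M, x ∉ Submodule.span ℝ (v '' Set.Iio n) → ‖v n‖ ≤ 2 * ‖x‖ := by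
  have step : ∀ W : Submodule ℝ E, ∃ y, W ≠ ⊤ → y ∈ M ∧ y ∉ W ∧ ∀ x ∈ M, x ∉ W → ‖y‖ ≤ 2 * ‖x‖ := by
    intro W
    by_cases hW : W = ⊤
    · exact ⟨0, fun h => absurd hW h⟩
    set S : Set ℝ := {r | ∃ x ∈ M, x ∉ W ∧ r = ‖x‖} with hS
    have hne : S.Nonempty := by
      by_contra hcon
      apply hW
      rw [eq_top_iff, ← hspan, Submodule.span_le]
      intro x hx
      by_contra hxW
      exact hcon ⟨‖x‖, x, hx, hxW, rfl⟩
    have hlb : ∀ r ∈ S, δ ≤ r := by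
      rintro r ⟨x, hx, hxW, rfl⟩
      apply hM x hx
      rintro rfl
      exact hxW W.zero_mem
    have hpos : δ ≤ sInf S := le_csInf hne hlb
    obtain ⟨r, ⟨y, hy, hyW, rfl⟩, hr⟩ := exists_lt_of_csInf_lt hne (show sInf S < 2 * sInf S by linarith)
    refine ⟨y, fun _ => ⟨hy, hyW, fun x hx hxW => ?_⟩⟩
    have : sInf S ≤ ‖x‖ := csInf_le ⟨δ, hlb⟩ ⟨x, hx, hxW, rfl⟩
    linarith
  choose F hF using step
  let W : ℕ → Submodule ℝ E := fun n => Nat.rec ⊥ (fun _ W => W ⊔ Submodule.span ℝ {F W}) n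
  have hWs : ∀ n, W n = Submodule.span ℝ ((fun n => F (W n)) '' Set.Iio n) := by
    intro n
    induction n with
    | zero => simp [W]
    | succ n ih =>
      have h1 : W (n+1) = W n ⊔ Submodule.span ℝ {F (W n)} := rfl
      have h2 : Set.Iio (n+1) = Set.Iio n ∪ {n} := by ext; simp
      rw [h1, h2, Set.image_union, Submodule.span_union, ← ih, Set.image_singleton]
  refine ⟨fun n => F (W n), fun n hn => ?_⟩
  rw [← hWs]
  apply hF
  intro htop
  classical
  have h3 : Set.finrank ℝ ((fun n => F (W n)) '' Set.Iio n) ≤ n := by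
    have h4 : (fun n => F (W n)) '' Set.Iio n = (((Finset.range n).image (fun n => F (W n)) : Finset E) : Set E) := by
      ext; simp
    rw [h4]
    exact (finrank_span_finset_le_card _).trans (Finset.card_image_le.trans (by simp))
  rw [Set.finrank, ← hWs n, htop, finrank_top] at h3
  omega

lemma core (d : ℕ) (A : Matrix (Fin d) (Fin d) ℝ) (hA : |A.det| = 1) :
    ∃ (x : Fin d → Fin d → ℤ) (l : Fin d → ℝ), (∀ j, 0 < l j) ∧ (∀ i j, i ≤ j → l i ≤ 2 * l j) ∧
      ∏ j, l j ≤ (4 * (d : ℝ)) ^ d ∧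
      (∀ j i, |A.mulVec (fun n => (x j n : ℝ)) i| ≤ l j) ∧
      LinearIndependent ℝ (fun j => A.mulVec (fun n => (x j n : ℝ))) := by
  rcases Nat.eq_zero_or_pos d with rfl | hdpos
  · exact ⟨0, 1, fun j => j.elim0, fun j => j.elim0, by simp, fun j => j.elim0,
      linearIndependent_empty_type⟩
  have hdR : (0 : ℝ) < d := by exact_mod_cast hdpos
  have hdet0 : A.det ≠ 0 := by
    intro h; rw [h] at hA; simp at hA
  have hunit : IsUnit A.det := isUnit_iff_ne_zero.mpr hdet0
  let p : (Fin d → ℤ) → EuclideanSpace ℝ (Fin d) :=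
    fun x => WithLp.toLp 2 (A.mulVec (fun n => (x n : ℝ)))
  have hpi : ∀ x i, |A.mulVec (fun n => (x n : ℝ)) i| ≤ ‖p x‖ := fun x i =>
    PiLp.norm_apply_le (p x) i
  set c : ℝ := 1 + ∑ i, ∑ j, |A⁻¹ i j| with hc
  have hcpos : 0 < c := by positivity
  have hdisc : ∀ y ∈ Set.range p, y ≠ 0 → 1 / c ≤ ‖y‖ := by
    rintro _ ⟨x, rfl⟩ hx
    have hx0 : ∃ i, x i ≠ 0 := by
      by_contra hcon
      push Not at hcon
      apply hx
      have : (fun n => (x n : ℝ)) = 0 := by funext n; simp [hcon n]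
      simp [p, this]
    obtain ⟨i, hi⟩ := hx0
    have h1 : (1 : ℝ) ≤ |(x i : ℝ)| := by
      exact_mod_cast Int.one_le_abs hi
    have h2 : (x i : ℝ) = ∑ j, A⁻¹ i j * A.mulVec (fun n => (x n : ℝ)) j := by
      have : A⁻¹.mulVec (A.mulVec (fun n => (x n : ℝ))) = (fun n => (x n : ℝ)) := by
        rw [Matrix.mulVec_mulVec, Matrix.nonsing_inv_mul _ hunit, Matrix.one_mulVec]
      exact (congrFun this i).symm
    have h3 : |(x i : ℝ)| ≤ (∑ j, |A⁻¹ i j|) * ‖p x‖ := by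
      rw [h2, Finset.sum_mul]
      refine (Finset.abs_sum_le_sum_abs _ _).trans (Finset.sum_le_sum fun j _ => ?_)
      rw [abs_mul]
      exact mul_le_mul_of_nonneg_left (hpi x j) (abs_nonneg _)
    have h4 : ∑ j, |A⁻¹ i j| ≤ c := by
      have := Finset.single_le_sum (f := fun i => ∑ j, |A⁻¹ i j|) (fun i _ => by positivity) (Finset.mem_univ i)
      linarith [this]
    rw [div_le_iff₀ hcpos]
    nlinarith [norm_nonneg (p x)]
  have hspan : Submodule.span ℝ (Set.range p) = ⊤ := by
    rw [eq_top_iff]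
    intro y _
    set z := A⁻¹.mulVec y.ofLp with hz
    have hy : y = ∑ i, z i • p (Pi.single i 1) := by
      have h1 : A.mulVec z = y.ofLp := by
        rw [hz, Matrix.mulVec_mulVec, Matrix.mul_nonsing_inv _ hunit, Matrix.one_mulVec]
      ext j
      rw [← h1]
      simp [p, Matrix.mulVec, dotProduct, Pi.single_apply, mul_comm]
    rw [hy]
    exact Submodule.sum_mem _ fun i _ => Submodule.smul_mem _ _ (Submodule.subset_span ⟨_, rfl⟩)
  obtain ⟨v, hv⟩ := greedy (Set.range p) (1 / c) (by positivity) hdisc hspan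
  rw [finrank_euclideanSpace_fin] at hv
  have hx : ∀ j : Fin d, ∃ x, p x = v j := fun j => (hv j j.2).1
  choose x hx using hx
  have hvne : ∀ j : Fin d, v j ≠ 0 := fun j h => (hv j j.2).2.1 (by rw [h]; exact Submodule.zero_mem _)
  have hlpos : ∀ j : Fin d, 0 < ‖v j‖ := fun j => norm_pos_iff.mpr (hvne j)
  have hspanmono : ∀ i j : ℕ, i ≤ j → Submodule.span ℝ (v '' Set.Iio i) ≤ Submodule.span ℝ (v '' Set.Iio j) :=
    fun i j hij => Submodule.span_mono (Set.image_mono (Set.Iio_subset_Iio hij))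
  have hmono : ∀ i j : Fin d, i ≤ j → ‖v i‖ ≤ 2 * ‖v j‖ := fun i j hij =>
    (hv i i.2).2.2 _ (hv j j.2).1 fun hmem => (hv j j.2).2.1 (hspanmono i j hij hmem)
  have hli : ∀ n ≤ d, LinearIndependent ℝ (fun i : Fin n => v i) := by
    intro n
    induction n with
    | zero => intro _; exact linearIndependent_empty_type
    | succ n ih =>
      intro hn
      rw [linearIndependent_finSucc']
      refine ⟨ih (by omega), ?_⟩
      have := (hv n (by omega)).2.1
      have h2 : Set.range (Fin.init (fun i : Fin (n+1) => v i)) = v '' Set.Iio n := by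
        ext y
        simp only [Set.mem_range, Set.mem_image, Set.mem_Iio]
        constructor
        · rintro ⟨i, rfl⟩; exact ⟨i, i.2, rfl⟩
        · rintro ⟨i, hi, rfl⟩; exact ⟨⟨i, hi⟩, rfl⟩
      rw [h2]
      simpa using this
  refine ⟨x, fun j => ‖v j‖, hlpos, hmono, ?_, fun j i => ?_, ?_⟩
  · -- product bound
    have hcard : Module.finrank ℝ (EuclideanSpace ℝ (Fin d)) = Fintype.card (Fin d) := by simp
    set e := InnerProductSpace.gramSchmidtOrthonormalBasis hcard (fun i : Fin d => v i) with he
    let O : Matrix (Fin d) (Fin d) ℝ := Matrix.of fun i j => e i j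
    have hO : O * O.transpose = 1 := by
      ext i j
      have := (orthonormal_iff_ite.mp e.orthonormal) i j
      rw [Matrix.one_apply, ← this, Matrix.mul_apply, PiLp.inner_apply]
      simp [O, mul_comm]
    have hOdet : |O.det| = 1 := by
      have h1 := congrArg Matrix.det hO
      rw [Matrix.det_mul, Matrix.det_transpose, Matrix.det_one] at h1
      have h2 : |O.det| * |O.det| = 1 := by rw [abs_mul_abs_self, h1]
      nlinarith [abs_nonneg O.det]
    set T := Matrix.diagonal (fun j : Fin d => ‖v j‖⁻¹) * O * A with hT
    have hTdet : |T.det| = (∏ j : Fin d, ‖v j‖)⁻¹ := by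
      rw [hT, Matrix.det_mul, Matrix.det_mul, abs_mul, abs_mul, hA, hOdet, Matrix.det_diagonal,
        Finset.prod_inv_distrib, mul_one, mul_one, abs_of_nonneg]
      exact inv_nonneg.mpr (Finset.prod_nonneg fun _ _ => norm_nonneg _)
    have hprodpos : 0 < ∏ j : Fin d, ‖v j‖ := Finset.prod_pos fun j _ => hlpos j
    have hTx : ∀ (y : Fin d → ℤ) i, T.mulVec (fun n => (y n : ℝ)) i = ‖v i‖⁻¹ * inner ℝ (e i) (p y) := by
      intro y i
      rw [hT, ← Matrix.mulVec_mulVec, ← Matrix.mulVec_mulVec, Matrix.mulVec_diagonal, PiLp.inner_apply]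
      simp [O, p, Matrix.mulVec, dotProduct, mul_comm]
    have hm := mink d T (by
      intro h; rw [h, abs_zero] at hTdet
      exact (inv_pos.mpr hprodpos).ne hTdet) (1 / (4 * d)) (by positivity) (by
        intro y hy
        have hpy : p y ≠ 0 := by
          intro h0
          apply hy
          have h1 : A.mulVec (fun n => (y n : ℝ)) = 0 := by
            have := congrArg WithLp.ofLp h0
            simpa [p] using this
          have h2 := Matrix.eq_zero_of_mulVec_eq_zero hdet0 h1
          funext n
          have h3 : (y n : ℝ) = 0 := congrFun h2 n
          exact_mod_cast h3
        -- the first j with p y in the span of v_0..v_j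
        have htop : p y ∈ Submodule.span ℝ (v '' Set.Iio d) := by
          have h1 := (hli d le_rfl).span_eq_top_of_card_eq_finrank' (by simp)
          have h2 : Set.range (fun i : Fin d => v i) = v '' Set.Iio d := by
            ext z
            simp only [Set.mem_range, Set.mem_image, Set.mem_Iio]
            constructor
            · rintro ⟨i, rfl⟩; exact ⟨i, i.2, rfl⟩
            · rintro ⟨i, hi, rfl⟩; exact ⟨⟨i, hi⟩, rfl⟩
          rw [← h2, h1]; trivial
        classical
        have hex : ∃ n, p y ∈ Submodule.span ℝ (v '' Set.Iio n) := ⟨d, htop⟩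
        have hnd : Nat.find hex ≤ d := Nat.find_min' hex htop
        have hn0 : Nat.find hex ≠ 0 := by
          intro h0
          have := Nat.find_spec hex
          rw [h0] at this
          simp at this
          exact hpy this
        obtain ⟨n, hn⟩ := Nat.exists_eq_succ_of_ne_zero hn0
        have hin : p y ∈ Submodule.span ℝ (v '' Set.Iio (n+1)) := by
          have := Nat.find_spec hex
          rwa [hn] at this
        have hnin : p y ∉ Submodule.span ℝ (v '' Set.Iio n) := Nat.find_min hex (by omega)
        have hnd' : n < d := by omega
        have hlow := (hv n hnd').2.2 _ ⟨y, rfl⟩ hnin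
        have hzero : ∀ i : Fin d, n < i → inner ℝ (e i) (p y) = 0 := by
          intro i hi
          have : Submodule.span ℝ (v '' Set.Iio (n+1)) ≤ LinearMap.ker (innerₛₗ ℝ (e i)) := by
            rw [Submodule.span_le]
            rintro _ ⟨m, hm, rfl⟩
            have hm' : m < n + 1 := hm
            have := InnerProductSpace.gramSchmidtOrthonormalBasis_inv_triangular hcard (fun i : Fin d => v i)
              (i := ⟨m, by omega⟩) (j := i) (by rw [Fin.lt_def]; simp; omega)
            simpa using this
          simpa using this hin
        by_contra hcon
        push Not at hcon
        have hvn : 0 < ‖v n‖ := hlpos ⟨n, hnd'⟩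
        have hb : ∀ i : Fin d, |inner ℝ (e i) (p y)| < ‖v n‖ / (2 * d) := by
          intro i
          by_cases hi : n < i
          · rw [hzero i hi, abs_zero]; positivity
          · have h1 := hcon i
            rw [hTx, abs_mul, abs_of_pos (inv_pos.mpr (hlpos i)), inv_mul_lt_iff₀ (hlpos i)] at h1
            have h2 := hmono i ⟨n, hnd'⟩ (by rw [Fin.le_def]; simp; omega)
            simp only at h2
            calc _ < ‖v i‖ * (1 / (4 * d)) := h1
              _ ≤ (2 * ‖v n‖) * (1 / (4 * d)) := by gcongr
              _ = _ := by field_simp; ring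
        have hsq := e.sum_sq_norm_inner_right (p y)
        have hstrict : ‖p y‖ ^ 2 < d * (‖v n‖ / (2 * d)) ^ 2 := by
          rw [← hsq]
          calc _ < ∑ i : Fin d, (‖v n‖ / (2 * d)) ^ 2 := by
                have : Nonempty (Fin d) := ⟨⟨n, hnd'⟩⟩
                apply Finset.sum_lt_sum_of_nonempty Finset.univ_nonempty
                intro i _
                rw [Real.norm_eq_abs]
                exact pow_lt_pow_left₀ (hb i) (abs_nonneg _) two_ne_zero
            _ = _ := by simp
        have h5 : (d : ℝ) * (‖v n‖ / (2 * d)) ^ 2 = ‖v n‖ ^ 2 / (4 * d) := by field_simp; ring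
        have h6 : ‖v n‖ ^ 2 / (4 * d) ≤ ‖v n‖ ^ 2 / 4 := by
          apply div_le_div_of_nonneg_left (by positivity) (by norm_num)
          have : (1 : ℝ) ≤ d := by exact_mod_cast hdpos
          linarith
        nlinarith)
    rw [hTdet, one_div, inv_pow] at hm
    exact (inv_le_inv₀ (by positivity) hprodpos).mp hm
  · have := hpi (x j) i
    rwa [hx j] at this
  · have h1 := hli d le_rfl
    have h2 := h1.map' (WithLp.linearEquiv 2 ℝ (Fin d → ℝ)).toLinearMap (LinearEquiv.ker _)
    have h3 : (fun j => A.mulVec (fun n => (x j n : ℝ))) =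
        (WithLp.linearEquiv 2 ℝ (Fin d → ℝ)).toLinearMap ∘ fun i : Fin d => v i := by
      funext j
      simp only [Function.comp]
      rw [← hx j]
      rfl
    rw [h3]
    exact h2

/-- The set whose infimum is the successive minimum. -/
def SM (d : ℕ) (Λ : Set (Fin d → ℝ)) (τ : Fin d → ℝ) (k : ℕ) : Set ℝ :=
  {lam : ℝ | 0 < lam ∧ ∃ v : Fin k → (Fin d → ℝ),
    (∀ l, v l ∈ Λ) ∧ LinearIndependent ℝ v ∧ ∀ l i, |v l i| ≤ lam * Real.exp (τ i)}

lemma detbound (d : ℕ) (N : Matrix (Fin d) (Fin d) ℝ) (c : Fin d → ℝ)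
    (h : ∀ r i, |N r i| ≤ c r) : |N.det| ≤ (d.factorial : ℝ) * ∏ r, c r := by
  rw [Matrix.det_apply']
  refine (Finset.abs_sum_le_sum_abs _ _).trans ?_
  calc _ ≤ ∑ σ : Equiv.Perm (Fin d), ∏ r, c r := by
        apply Finset.sum_le_sum
        intro σ _
        rw [abs_mul, Finset.abs_prod]
        have h1 : |((Equiv.Perm.sign σ : ℤ) : ℝ)| = 1 := by
          rcases Int.units_eq_one_or (Equiv.Perm.sign σ) with h | h <;> simp [h]
        rw [h1, one_mul, ← Equiv.prod_comp σ c]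
        exact Finset.prod_le_prod (fun _ _ => abs_nonneg _) (fun i _ => h _ _)
    _ = _ := by simp [Fintype.card_perm]

lemma dual_upper (d : ℕ) (B : Matrix (Fin d) (Fin d) ℝ) (hB : |B.det| = 1) (Λ : Set (Fin d → ℝ))
    (hΛ : Λ = {v | ∃ x : Fin d → ℤ, v = B.mulVec fun i => (x i : ℝ)})
    (τ : Fin d → ℝ) (hτ : ∑ i, τ i = 0) (k : ℕ) (hk1 : 1 ≤ k) (hkd : k ≤ d) :
    ∃ a ∈ SM d Λ τ k, ∃ b ∈ SM d (dualLattice d Λ) (-τ) (d + 1 - k),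
      a * b ≤ 4 * d.factorial * (4 * (d : ℝ)) ^ d := by
  set A := Matrix.diagonal (fun i => Real.exp (-τ i)) * B with hAdef
  have hA : |A.det| = 1 := by
    rw [hAdef, Matrix.det_mul, abs_mul, hB, Matrix.det_diagonal, ← Real.exp_sum,
      Finset.sum_neg_distrib, hτ]
    simp
  have hAB : ∀ y i, A.mulVec y i = Real.exp (-τ i) * B.mulVec y i := by
    intro y i
    rw [hAdef, ← Matrix.mulVec_mulVec, Matrix.mulVec_diagonal]
  obtain ⟨x, l, hl, hmono, hprod, hb, hli⟩ := core d A hA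
  let kk : Fin d := ⟨k - 1, by omega⟩
  have hdet0 : A.det ≠ 0 := by
    intro h; rw [h] at hA; simp at hA
  refine ⟨2 * l kk, ⟨by linarith [hl kk], fun m => B.mulVec (fun n => (x (Fin.castLE hkd m) n : ℝ)), ?_, ?_, ?_⟩,
    2 * d.factorial * (4 * (d : ℝ)) ^ d / l kk, ⟨?_, ?_⟩, ?_⟩
  · intro m
    rw [hΛ]
    exact ⟨_, rfl⟩
  · have h1 := hli.comp (Fin.castLE hkd) (Fin.castLE_injective hkd)
    let D : (Fin d → ℝ) →ₗ[ℝ] (Fin d → ℝ) := Matrix.toLin' (Matrix.diagonal (fun i => Real.exp (-τ i)))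
    apply LinearIndependent.of_comp D
    convert h1 using 1
    funext m
    ext i
    simp only [Function.comp, D, Matrix.toLin'_apply, Matrix.mulVec_diagonal, hAB]
  · intro m i
    have h1 := hb (Fin.castLE hkd m) i
    rw [hAB, abs_mul, abs_of_pos (Real.exp_pos _), Real.exp_neg, inv_mul_le_iff₀ (Real.exp_pos _)] at h1
    have h2 := hmono (Fin.castLE hkd m) kk (by rw [Fin.le_def]; simp [kk]; omega)
    nlinarith [Real.exp_pos (τ i)]
  · have : (0 : ℝ) < d := by exact_mod_cast (by omega : 0 < d)
    have := hl kk
    positivity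
  · let V : Matrix (Fin d) (Fin d) ℝ := Matrix.of fun r => A.mulVec (fun n => (x r n : ℝ))
    let X : Matrix (Fin d) (Fin d) ℤ := Matrix.of x
    have hVX : V = X.map (Int.cast : ℤ → ℝ) * A.transpose := by
      ext r i
      simp [V, X, Matrix.mul_apply, Matrix.mulVec, dotProduct, mul_comm]
    have hVunit : IsUnit V := by
      rw [← Matrix.linearIndependent_rows_iff_isUnit]
      exact hli
    have hVdet : V.det ≠ 0 := ((Matrix.isUnit_iff_isUnit_det _).mp hVunit).ne_zero
    have hadj : LinearIndependent ℝ (V.adjugate.transpose.row) := by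
      rw [Matrix.linearIndependent_rows_iff_isUnit, Matrix.isUnit_iff_isUnit_det,
        Matrix.det_transpose, Matrix.det_adjugate]
      exact (isUnit_iff_ne_zero.mpr hVdet).pow _
    have hbound : ∀ i j, |V.adjugate i j| ≤ d.factorial * (4 * (d : ℝ)) ^ d / l j := by
      intro i j
      rw [Matrix.adjugate_apply]
      have h1 := detbound d (V.updateRow j (Pi.single i 1)) (Function.update l j 1) (by
        intro r s
        by_cases hr : r = j
        · subst hr
          simp only [Matrix.updateRow_self, Function.update_self, Pi.single_apply]
          split_ifs <;> simp
        · rw [Matrix.updateRow_ne hr, Function.update_of_ne hr]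
          exact hb r s)
      refine h1.trans ?_
      rw [mul_div_assoc]
      apply mul_le_mul_of_nonneg_left _ (by positivity)
      rw [le_div_iff₀ (hl j), Finset.prod_update_of_mem (Finset.mem_univ j), one_mul]
      refine le_trans (le_of_eq ?_) hprod
      rw [mul_comm, ← Finset.prod_erase_mul _ _ (Finset.mem_univ j), mul_comm, Finset.sdiff_singleton_eq_erase]
    have hD : ∀ m : Fin (d + 1 - k), k - 1 + (m : ℕ) < d := fun m => by have := m.2; omega
    let φ : Fin (d + 1 - k) → Fin d := fun m => ⟨k - 1 + m, hD m⟩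
    have hφ : Function.Injective φ := by
      intro m n h
      have := congrArg Fin.val h
      simp only [φ] at this
      ext; omega
    refine ⟨fun m i => V.adjugate i (φ m) * Real.exp (-τ i), ?_, ?_, ?_⟩
    · intro m z hz
      rw [hΛ] at hz
      obtain ⟨y, rfl⟩ := hz
      have h1 : A.transpose * V.adjugate = A.det • (X.adjugate.map (Int.cast : ℤ → ℝ)) := by
        rw [hVX, Matrix.adjugate_mul_distrib, ← Matrix.mul_assoc, Matrix.mul_adjugate,
          Matrix.det_transpose, Matrix.smul_mul, Matrix.one_mul]
        congr 1
        have := RingHom.map_adjugate (Int.castRingHom ℝ) X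
        simpa using this.symm
      have h2 : ∑ i, V.adjugate i (φ m) * Real.exp (-τ i) * B.mulVec (fun i => (y i : ℝ)) i =
          A.det * ((Matrix.vecMul y X.adjugate (φ m) : ℤ) : ℝ) := by
        have h3 : ∑ i, V.adjugate i (φ m) * Real.exp (-τ i) * B.mulVec (fun i => (y i : ℝ)) i =
            Matrix.vecMul (A.mulVec (fun i => (y i : ℝ))) V.adjugate (φ m) := by
          rw [Matrix.vecMul, dotProduct]
          apply Finset.sum_congr rfl
          intro i _
          rw [hAB]; ring
        rw [h3, ← Matrix.vecMul_transpose, Matrix.vecMul_vecMul, h1]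
        simp [Matrix.vecMul, dotProduct, Finset.mul_sum]
        apply Finset.sum_congr rfl
        intro i _
        ring
      rw [h2]
      rcases (abs_eq one_pos.le).mp hA with h | h
      · exact ⟨_, by rw [h, one_mul]⟩
      · exact ⟨-(Matrix.vecMul y X.adjugate (φ m)), by rw [h]; push_cast; ring⟩
    · have h1 := hadj.comp φ hφ
      let D : (Fin d → ℝ) →ₗ[ℝ] (Fin d → ℝ) := Matrix.toLin' (Matrix.diagonal (fun i => Real.exp (τ i)))
      apply LinearIndependent.of_comp D
      convert h1 using 1
      funext m
      ext i
      simp only [Function.comp, D, Matrix.toLin'_apply, Matrix.mulVec_diagonal, Matrix.row, Matrix.transpose_apply]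
      rw [Real.exp_neg]
      have := Real.exp_pos (τ i)
      field_simp
    · intro m i
      rw [abs_mul, abs_of_pos (Real.exp_pos _), Pi.neg_apply]
      apply mul_le_mul_of_nonneg_right _ (Real.exp_pos _).le
      refine (hbound i (φ m)).trans ?_
      have h2 := hmono kk (φ m) (by rw [Fin.le_def]; simp [kk, φ])
      rw [div_le_div_iff₀ (hl _) (hl _)]
      have : (0 : ℝ) ≤ d.factorial * (4 * (d : ℝ)) ^ d := by positivity
      nlinarith
  · have := hl kk
    apply le_of_eq
    field_simp
    ring

lemma dual_lower (d : ℕ) (Λ : Set (Fin d → ℝ)) (τ : Fin d → ℝ) (k : ℕ) (hkd : k ≤ d)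
    (a b : ℝ) (ha : a ∈ SM d Λ τ k) (hb : b ∈ SM d (dualLattice d Λ) (-τ) (d + 1 - k)) :
    1 ≤ d * (a * b) := by
  obtain ⟨ha0, v, hvΛ, hvli, hv⟩ := ha
  obtain ⟨hb0, w, hwΛ, hwli, hw⟩ := hb
  by_cases hex : ∃ m n, ∑ i, w m i * v n i ≠ 0
  · obtain ⟨m, n, hmn⟩ := hex
    obtain ⟨c, hc⟩ := hwΛ m (v n) (hvΛ n)
    rw [hc] at hmn
    have hc0 : c ≠ 0 := by exact_mod_cast hmn
    have h1 : (1 : ℝ) ≤ |(c : ℝ)| := by exact_mod_cast Int.one_le_abs hc0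
    refine h1.trans ?_
    rw [← hc]
    refine (Finset.abs_sum_le_sum_abs _ _).trans ?_
    calc _ ≤ ∑ i : Fin d, a * b := by
          apply Finset.sum_le_sum
          intro i _
          rw [abs_mul]
          calc _ ≤ (b * Real.exp ((-τ) i)) * (a * Real.exp (τ i)) :=
                mul_le_mul (hw m i) (hv n i) (abs_nonneg _) (by positivity)
            _ = a * b * (Real.exp ((-τ) i) * Real.exp (τ i)) := by ring
            _ = a * b := by rw [← Real.exp_add]; simp
      _ = _ := by simp
  · exfalso
    push Not at hex
    -- the span of w is inside the annihilator of the span of v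
    let Wm : Matrix (Fin (d + 1 - k)) (Fin d) ℝ := Matrix.of w
    let f := Wm.mulVecLin
    have hker : Submodule.span ℝ (Set.range v) ≤ LinearMap.ker f := by
      rw [Submodule.span_le]
      rintro _ ⟨n, rfl⟩
      rw [SetLike.mem_coe, LinearMap.mem_ker]
      funext m
      exact hex m n
    have h1 : k ≤ Module.finrank ℝ (LinearMap.ker f) := by
      have := Submodule.finrank_mono hker
      rwa [finrank_span_eq_card hvli, Fintype.card_fin] at this
    have h2 : Module.finrank ℝ (LinearMap.range f) = d + 1 - k := by
      have : Wm.rank = d + 1 - k := by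
        have := LinearIndependent.rank_matrix (M := Wm) hwli
        simpa using this
      exact this
    have h3 := f.finrank_range_add_finrank_ker
    rw [Module.finrank_fin_fun] at h3
    omega

lemma logs (d : ℕ) (Λ : Set (Fin d → ℝ))
    (hΛ : IsUnimodularLattice d Λ) (k : ℕ) (hk1 : 1 ≤ k) (hkd : k ≤ d) :
    ∃ C : ℝ, ∀ τ : Fin d → ℝ, ∑ i, τ i = 0 →
      |Lk d Λ τ k + Lk d (dualLattice d Λ) (-τ) (d + 1 - k)| ≤ C ∧
      |Lk d Λ τ k| ≤ C + ⨆ i, |τ i| ∧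
      |Lk d (dualLattice d Λ) τ (d + 1 - k)| ≤ C + ⨆ i, |τ i| := by
  obtain ⟨B, hB, hΛB⟩ := hΛ
  have hdpos : (0 : ℝ) < d := by exact_mod_cast (by omega : 0 < d)
  set K : ℝ := 4 * d.factorial * (4 * (d : ℝ)) ^ d with hK
  have hbdd : ∀ (M : Set (Fin d → ℝ)) τ j, BddBelow (SM d M τ j) := fun M τ j => ⟨0, fun a ha => ha.1.le⟩
  -- the product of the two minima
  have hmain : ∀ τ : Fin d → ℝ, ∑ i, τ i = 0 →
      0 < succMin d Λ τ k ∧ 0 < succMin d (dualLattice d Λ) (-τ) (d + 1 - k) ∧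
      1 ≤ d * (succMin d Λ τ k * succMin d (dualLattice d Λ) (-τ) (d + 1 - k)) ∧
      succMin d Λ τ k * succMin d (dualLattice d Λ) (-τ) (d + 1 - k) ≤ K := by
    intro τ hτ
    obtain ⟨a, ha, b, hb, hab⟩ := dual_upper d B hB Λ hΛB τ hτ k hk1 hkd
    have e1 : succMin d Λ τ k = sInf (SM d Λ τ k) := rfl
    have e2 : succMin d (dualLattice d Λ) (-τ) (d + 1 - k) = sInf (SM d (dualLattice d Λ) (-τ) (d + 1 - k)) := rfl
    rw [e1, e2]
    set s := sInf (SM d Λ τ k)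
    set t := sInf (SM d (dualLattice d Λ) (-τ) (d + 1 - k))
    have hs : ∀ b' ∈ SM d (dualLattice d Λ) (-τ) (d + 1 - k), 1 / (d * b') ≤ s := by
      intro b' hb'
      apply le_csInf ⟨a, ha⟩
      intro a' ha'
      have := dual_lower d Λ τ k hkd a' b' ha' hb'
      have h0 := hb'.1
      rw [div_le_iff₀ (by positivity)]
      linarith
    have hs0 : 0 < s := lt_of_lt_of_le (by have := hb.1; positivity) (hs b hb)
    have ht : 1 / (d * s) ≤ t := by
      apply le_csInf ⟨b, hb⟩
      intro b' hb'
      have := hs b' hb'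
      have h0 := hb'.1
      rw [div_le_iff₀ (by positivity)] at this ⊢
      linarith
    have ht0 : 0 < t := lt_of_lt_of_le (by positivity) ht
    refine ⟨hs0, ht0, ?_, ?_⟩
    · rw [div_le_iff₀ (by positivity)] at ht
      linarith
    · have h1 : s ≤ a := csInf_le (hbdd _ _ _) ha
      have h2 : t ≤ b := csInf_le (hbdd _ _ _) hb
      exact (mul_le_mul h1 h2 ht0.le ha.1.le).trans hab
  have hKpos : 0 < K := by positivity
  have hsum : ∀ τ : Fin d → ℝ, ∑ i, τ i = 0 →
      |Lk d Λ τ k + Lk d (dualLattice d Λ) (-τ) (d + 1 - k)| ≤ |Real.log K| + |Real.log d| := by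
    intro τ hτ
    obtain ⟨h1, h2, h3, h4⟩ := hmain τ hτ
    unfold Lk
    rw [← Real.log_mul h1.ne' h2.ne']
    have h5 := Real.log_le_log (by positivity) h4
    have h6 := Real.log_le_log one_pos h3
    rw [Real.log_one, Real.log_mul hdpos.ne' (by positivity)] at h6
    rw [abs_le]
    constructor
    · linarith [le_abs_self (Real.log d), abs_nonneg (Real.log K)]
    · linarith [le_abs_self (Real.log K), abs_nonneg (Real.log d)]
  obtain ⟨a, ha, b, hb, -⟩ := dual_upper d B hB Λ hΛB 0 (by simp) k hk1 hkd
  have hup : ∀ (M : Set (Fin d → ℝ)) (σ τ : Fin d → ℝ) (j : ℕ) (c : ℝ), σ = 0 → c ∈ SM d M σ j →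
      0 < succMin d M τ j → Lk d M τ j ≤ Real.log c + ⨆ i, |τ i| := by
    intro M σ τ j c hσ hc hpos
    subst hσ
    obtain ⟨hc0, v, hv1, hv2, hv3⟩ := hc
    have hle : succMin d M τ j ≤ c * Real.exp (⨆ i, |τ i|) := by
      apply csInf_le (hbdd M τ j)
      refine ⟨by positivity, v, hv1, hv2, fun l i => (hv3 l i).trans ?_⟩
      have h1 : |τ i| ≤ ⨆ i, |τ i| := le_ciSup (Set.finite_range (fun i => |τ i|)).bddAbove i
      rw [mul_assoc, ← Real.exp_add]
      apply mul_le_mul_of_nonneg_left _ hc0.le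
      apply Real.exp_le_exp.mpr
      have := neg_abs_le (τ i)
      simp only [Pi.zero_apply]
      linarith
    have := Real.log_le_log hpos hle
    rwa [Real.log_mul hc0.ne' (Real.exp_pos _).ne', Real.log_exp] at this
  refine ⟨|Real.log K| + |Real.log d| + |Real.log a| + |Real.log b|, fun τ hτ => ?_⟩
  have hτ' : ∑ i, (-τ) i = 0 := by simp [hτ]
  have hsupneg : ⨆ i, |(-τ) i| = ⨆ i, |τ i| := by simp
  obtain ⟨p1, p2, -, -⟩ := hmain τ hτ
  obtain ⟨q1, q2, -, -⟩ := hmain (-τ) hτ'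
  have s1 := hsum τ hτ
  have s2 := hsum (-τ) hτ'
  rw [neg_neg] at q2 s2
  have u1 := hup Λ 0 τ k a rfl ha p1
  have u2 := hup Λ 0 (-τ) k a rfl ha q1
  have u3 := hup (dualLattice d Λ) (-0) τ _ b neg_zero hb q2
  have u4 := hup (dualLattice d Λ) (-0) (-τ) _ b neg_zero hb p2
  rw [hsupneg] at u2 u4
  have n1 := le_abs_self (Real.log a)
  have n2 := le_abs_self (Real.log b)
  have n3 := abs_nonneg (Real.log a)
  have n4 := abs_nonneg (Real.log b)
  have s1' := abs_le.mp s1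
  have s2' := abs_le.mp s2
  refine ⟨by linarith, ?_, ?_⟩
  · rw [abs_le]; constructor <;> linarith [s1'.1, s1'.2]
  · rw [abs_le]; constructor <;> linarith [s2'.1, s2'.2]

lemma half_lim {α : Type*} {F : Filter α} [F.NeBot] (g h f f' : α → ℝ) (K C : ℝ) (hK : 1 ≤ K)
    (hf' : Tendsto f' F atTop) (hfpos : ∀ᶠ x in F, 0 < f x)
    (hff : ∀ᶠ x in F, f x ≤ K * f' x ∧ f' x ≤ K * f x)
    (he : ∀ᶠ x in F, |h x - g x| ≤ C)
    (D : ℝ) (hu : ∀ᶠ x in F, |g x / f x| ≤ D) (hv : ∀ᶠ x in F, |h x / f' x| ≤ D) :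
    min (K * liminf (fun x => g x / f x) F) (liminf (fun x => g x / f x) F / K) ≤
      liminf (fun x => h x / f' x) F := by
  set a := liminf (fun x => g x / f x) F with ha
  have hK0 : 0 < K := by linarith
  have hub : IsBoundedUnder (· ≥ ·) F (fun x => g x / f x) :=
    ⟨-D, by
      rw [eventually_map]
      filter_upwards [hu] with x hx using (abs_le.mp hx).1⟩
  have hvb : IsBoundedUnder (· ≤ ·) F (fun x => h x / f' x) :=
    ⟨D, by
      rw [eventually_map]
      filter_upwards [hv] with x hx using (abs_le.mp hx).2⟩
  apply le_of_forall_pos_le_add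
  intro ε hε
  set η := ε / (K + 1) with hη
  have hηpos : 0 < η := by positivity
  have hηε : K * η + η = ε := by rw [hη]; field_simp
  suffices min (K * a) (a / K) - ε ≤ liminf (fun x => h x / f' x) F by linarith
  apply le_liminf_of_le hvb.isCoboundedUnder_ge
  have h1 : ∀ᶠ x in F, a - η < g x / f x := eventually_lt_of_lt_liminf (by rw [← ha]; linarith) hub
  filter_upwards [h1, hfpos, hff, he, hf'.eventually_ge_atTop (C / η), hf'.eventually_gt_atTop 0]
    with x h1 hfx hffx hex hCx hf'x
  rw [lt_div_iff₀ hfx] at h1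
  rw [le_div_iff₀ hf'x]
  rw [div_le_iff₀ hηpos] at hCx
  have h2 := (abs_le.mp hex).1
  have h3 : (min (K * a) (a / K) - K * η) * f' x ≤ (a - η) * f x := by
    by_cases hs : 0 ≤ a - η
    · have h4 : min (K * a) (a / K) - K * η ≤ (a - η) / K := by
        have := min_le_right (K * a) (a / K)
        have h5 : η / K ≤ K * η := by
          rw [div_le_iff₀ hK0]
          nlinarith [mul_pos hK0 hηpos]
        rw [sub_div]; linarith
      calc _ ≤ (a - η) / K * f' x := by gcongr
        _ ≤ (a - η) / K * (K * f x) := mul_le_mul_of_nonneg_left hffx.2 (by positivity)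
        _ = _ := by field_simp
    · push Not at hs
      have h4 : min (K * a) (a / K) - K * η ≤ K * (a - η) := by
        have := min_le_left (K * a) (a / K)
        linarith
      calc _ ≤ K * (a - η) * f' x := by gcongr
        _ = (a - η) * (K * f' x) := by ring
        _ ≤ _ := mul_le_mul_of_nonpos_left hffx.1 hs.le
  have h6 : (min (K * a) (a / K) - ε) * f' x = (min (K * a) (a / K) - K * η) * f' x - f' x * η := by
    rw [← hηε]; ring
  linarith

lemma sign_arith (K a b : ℝ) (hK : 1 ≤ K) (h1 : min (K * a) (a / K) ≤ b)
    (h2 : min (K * b) (b / K) ≤ a) :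
    ((a = 0 ∧ b = 0) ∨ (a < 0 ∧ b < 0) ∨ (0 < a ∧ 0 < b)) ∧ |a| ≤ K * |b| := by
  have hK0 : 0 < K := by linarith
  rcases lt_trichotomy a 0 with ha | ha | ha
  · have hb : b < 0 := by
      by_contra hb
      push Not at hb
      have : 0 ≤ min (K * b) (b / K) := le_min (by positivity) (by positivity)
      linarith
    refine ⟨Or.inr (Or.inl ⟨ha, hb⟩), ?_⟩
    rw [abs_of_neg ha, abs_of_neg hb]
    have : K * b ≤ b / K := by
      rw [le_div_iff₀ hK0]
      have : 1 ≤ K * K := by nlinarith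
      nlinarith
    rw [min_eq_left this] at h2
    linarith
  · subst ha
    have hb : b = 0 := by
      have h3 : 0 ≤ b := by simpa using h1
      by_contra hne
      have hb : 0 < b := lt_of_le_of_ne h3 (Ne.symm hne)
      have : 0 < min (K * b) (b / K) := lt_min (by positivity) (by positivity)
      linarith
    subst hb
    simp
  · have h3 : 0 < min (K * a) (a / K) := lt_min (by positivity) (by positivity)
    have hb : 0 < b := by linarith
    refine ⟨Or.inr (Or.inr ⟨ha, hb⟩), ?_⟩
    rw [abs_of_pos ha, abs_of_pos hb]
    have : a / K ≤ K * a := by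
      rw [div_le_iff₀ hK0]
      have : 1 ≤ K * K := by nlinarith
      nlinarith
    rw [min_eq_right this, div_le_iff₀ hK0] at h1
    linarith

lemma limsup_neg_aux {α : Type*} {F : Filter α} [F.NeBot] (u : α → ℝ) :
    limsup (fun x => -u x) F = - liminf u F := by
  rw [limsup_eq, liminf_eq, ← Real.sInf_neg]
  congr 1
  ext a
  simp only [Set.mem_ofPred_eq, Set.mem_neg]
  constructor <;> intro h <;> filter_upwards [h] with x hx <;> linarith

lemma full_lim {α : Type*} {F : Filter α} [F.NeBot] (g h f f' : α → ℝ) (K C : ℝ) (hK : 1 ≤ K)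
    (hf : Tendsto f F atTop) (hf' : Tendsto f' F atTop)
    (hff : ∀ᶠ x in F, f x ≤ K * f' x ∧ f' x ≤ K * f x)
    (he : ∀ᶠ x in F, |h x - g x| ≤ C)
    (D : ℝ) (hu : ∀ᶠ x in F, |g x / f x| ≤ D) (hv : ∀ᶠ x in F, |h x / f' x| ≤ D) :
    ((liminf (fun x => g x / f x) F = 0 ∧ liminf (fun x => h x / f' x) F = 0) ∨
      (liminf (fun x => g x / f x) F < 0 ∧ liminf (fun x => h x / f' x) F < 0) ∨
      (0 < liminf (fun x => g x / f x) F ∧ 0 < liminf (fun x => h x / f' x) F)) ∧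
    |liminf (fun x => g x / f x) F| ≤ K * |liminf (fun x => h x / f' x) F| := by
  apply sign_arith K _ _ hK
  · exact half_lim g h f f' K C hK hf' (hf.eventually_gt_atTop 0) hff he D hu hv
  · refine half_lim h g f' f K C hK hf (hf'.eventually_gt_atTop 0) ?_ ?_ D hv hu
    · filter_upwards [hff] with x hx using ⟨hx.2, hx.1⟩
    · filter_upwards [he] with x hx
      rwa [abs_sub_comm]

lemma T_comp (d : ℕ) (hd : 2 ≤ d) (τ : Fin d → ℝ) (hτ : ∑ i, τ i = 0) :
    ⨆ i, |τ i| ≤ ((d : ℝ) - 1) * ⨆ i, τ i := by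
  have : Nonempty (Fin d) := ⟨⟨0, by omega⟩⟩
  have hdR : (2 : ℝ) ≤ d := by exact_mod_cast hd
  have hle : ∀ i, τ i ≤ ⨆ i, τ i := fun i => le_ciSup (Set.finite_range τ).bddAbove i
  have hm0 : 0 ≤ ⨆ i, τ i := by
    by_contra hneg
    push Not at hneg
    have : ∑ i, τ i < 0 := Finset.sum_neg (fun i _ => (hle i).trans_lt hneg) Finset.univ_nonempty
    linarith
  apply ciSup_le
  intro i
  rw [abs_le]
  constructor
  · have h1 := Finset.add_sum_erase Finset.univ τ (Finset.mem_univ i)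
    have h2 : ∑ j ∈ Finset.univ.erase i, τ j ≤ ((d : ℝ) - 1) * ⨆ i, τ i := by
      calc _ ≤ ∑ j ∈ Finset.univ.erase i, ⨆ i, τ i := Finset.sum_le_sum fun j _ => hle j
        _ = _ := by
          rw [Finset.sum_const, Finset.card_erase_of_mem (Finset.mem_univ i), Finset.card_univ,
            Fintype.card_fin, nsmul_eq_mul, Nat.cast_sub (by omega), Nat.cast_one]
    linarith
  · have := hle i
    nlinarith

lemma T_neBot (d : ℕ) (hd : 2 ≤ d) : (Tfilter d).NeBot := by
  let i0 : Fin d := ⟨0, by omega⟩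
  let i1 : Fin d := ⟨1, by omega⟩
  have h01 : i0 ≠ i1 := by simp [i0, i1]
  let γ : ℝ → Fin d → ℝ := fun t => Pi.single i0 t - Pi.single i1 t
  have : Tendsto γ atTop (Tfilter d) := by
    rw [Tfilter, tendsto_inf, tendsto_comap_iff, tendsto_principal]
    constructor
    · apply tendsto_atTop_mono _ tendsto_id
      intro t
      have h1 : |γ t i0| ≤ ⨆ i, |γ t i| := le_ciSup (Set.finite_range (fun i => |γ t i|)).bddAbove i0
      have h2 : γ t i0 = t := by simp [γ, h01]
      rw [h2] at h1
      exact (le_abs_self t).trans h1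
    · exact Eventually.of_forall fun t => by simp [γ, Finset.sum_sub_distrib]
  exact this.neBot

lemma T_neg (d : ℕ) : map (fun τ : Fin d → ℝ => -τ) (Tfilter d) = Tfilter d := by
  have h : Tendsto (fun τ : Fin d → ℝ => -τ) (Tfilter d) (Tfilter d) := by
    conv_rhs => rw [Tfilter]
    rw [tendsto_inf, tendsto_comap_iff, tendsto_principal]
    constructor
    · have : ((fun τ : Fin d → ℝ => ⨆ i, |τ i|) ∘ fun τ => -τ) = fun τ : Fin d → ℝ => ⨆ i, |τ i| := by
        funext τ; simp
      rw [this]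
      exact tendsto_comap.mono_left inf_le_left
    · have : ∀ᶠ τ in Tfilter d, τ ∈ {τ : Fin d → ℝ | ∑ i, τ i = 0} :=
        mem_inf_of_right (mem_principal_self _)
      filter_upwards [this] with τ hτ
      simpa using hτ
  apply le_antisymm h
  have h2 := map_mono (m := fun τ : Fin d → ℝ => -τ) h
  rw [map_map] at h2
  simpa [Function.comp_def] using h2

theorem stmt19 (d : ℕ) (hd : 2 ≤ d) (Λ : Set (Fin d → ℝ))
    (hΛ : IsUnimodularLattice d Λ) (k : ℕ) (hk1 : 1 ≤ k) (hkd : k ≤ d) :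
    ((psiLowF d Λ k = 0 ∧ psiUpF d (dualLattice d Λ) (d + 1 - k) = 0) ∨
      (psiLowF d Λ k < 0 ∧ 0 < psiUpF d (dualLattice d Λ) (d + 1 - k)) ∨
      (0 < psiLowF d Λ k ∧ psiUpF d (dualLattice d Λ) (d + 1 - k) < 0)) ∧
    ((psiUpF d Λ k = 0 ∧ psiLowF d (dualLattice d Λ) (d + 1 - k) = 0) ∨
      (psiUpF d Λ k < 0 ∧ 0 < psiLowF d (dualLattice d Λ) (d + 1 - k)) ∨
      (0 < psiUpF d Λ k ∧ psiLowF d (dualLattice d Λ) (d + 1 - k) < 0)) ∧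
    |psiLowF d Λ k| ≤ ((d : ℝ) - 1) * |psiUpF d (dualLattice d Λ) (d + 1 - k)| ∧
    |psiUpF d Λ k| ≤ ((d : ℝ) - 1) * |psiLowF d (dualLattice d Λ) (d + 1 - k)| := by

  have hNB := T_neBot d hd
  obtain ⟨C, hC⟩ := logs d Λ hΛ k hk1 hkd
  have hdR : (2 : ℝ) ≤ d := by exact_mod_cast hd
  have hTsum : ∀ᶠ τ in Tfilter d, ∑ i, τ i = 0 :=
    mem_inf_of_right (mem_principal_self {τ : Fin d → ℝ | ∑ i, τ i = 0})
  have hTabs : Tendsto (fun τ : Fin d → ℝ => ⨆ i, |τ i|) (Tfilter d) atTop :=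
    tendsto_comap.mono_left inf_le_left
  set f : (Fin d → ℝ) → ℝ := fun τ => ⨆ i, τ i with hf
  set f' : (Fin d → ℝ) → ℝ := fun τ => ⨆ i, (-τ) i with hf'
  set g : (Fin d → ℝ) → ℝ := fun τ => Lk d Λ τ k with hg
  set h : (Fin d → ℝ) → ℝ := fun τ => -Lk d (dualLattice d Λ) (-τ) (d + 1 - k) with hh
  set K : ℝ := (d : ℝ) - 1 with hKdef
  have hK : 1 ≤ K := by rw [hKdef]; linarith
  have hK0 : 0 < K := by linarith
  have : Nonempty (Fin d) := ⟨⟨0, by omega⟩⟩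
  have hcmp : ∀ τ : Fin d → ℝ, ∑ i, τ i = 0 → (⨆ i, |τ i|) ≤ K * f τ ∧ (⨆ i, |τ i|) ≤ K * f' τ ∧
      f τ ≤ (⨆ i, |τ i|) ∧ f' τ ≤ (⨆ i, |τ i|) := by
    intro τ hτ
    have hb : ∀ i, |τ i| ≤ ⨆ i, |τ i| := fun i => le_ciSup (Set.finite_range (fun i => |τ i|)).bddAbove i
    refine ⟨T_comp d hd τ hτ, ?_, ?_, ?_⟩
    · have := T_comp d hd (-τ) (by simp [hτ])
      have h4 : ⨆ i, |(-τ) i| = ⨆ i, |τ i| := by simp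
      rw [h4] at this
      exact this
    · exact ciSup_le fun i => (le_abs_self _).trans (hb i)
    · exact ciSup_le fun i => (neg_le_abs _).trans (hb i)
  have tf : Tendsto f (Tfilter d) atTop := by
    have : Tendsto (fun τ : Fin d → ℝ => (⨆ i, |τ i|) / K) (Tfilter d) atTop := hTabs.atTop_div_const hK0
    apply tendsto_atTop_mono' _ _ this
    filter_upwards [hTsum] with τ hτ
    rw [div_le_iff₀ hK0]
    linarith [(hcmp τ hτ).1]
  have tf' : Tendsto f' (Tfilter d) atTop := by
    have : Tendsto (fun τ : Fin d → ℝ => (⨆ i, |τ i|) / K) (Tfilter d) atTop := hTabs.atTop_div_const hK0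
    apply tendsto_atTop_mono' _ _ this
    filter_upwards [hTsum] with τ hτ
    rw [div_le_iff₀ hK0]
    linarith [(hcmp τ hτ).2.1]
  have hff : ∀ᶠ τ in Tfilter d, f τ ≤ K * f' τ ∧ f' τ ≤ K * f τ := by
    filter_upwards [hTsum] with τ hτ
    obtain ⟨h1, h2, h3, h4⟩ := hcmp τ hτ
    exact ⟨h3.trans h2, h4.trans h1⟩
  have he : ∀ᶠ τ in Tfilter d, |h τ - g τ| ≤ C := by
    filter_upwards [hTsum] with τ hτ
    have := (hC τ hτ).1
    rw [← abs_neg] at this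
    convert this using 2
    simp only [hh, hg]; ring
  have hu : ∀ᶠ τ in Tfilter d, |g τ / f τ| ≤ C + K := by
    filter_upwards [hTsum, tf.eventually_ge_atTop 1] with τ hτ h1
    have h2 := (hC τ hτ).2.1
    have h3 := (hcmp τ hτ).1
    have hC0 : 0 ≤ C := (abs_nonneg _).trans (hC τ hτ).1
    rw [abs_div, abs_of_pos (by linarith : 0 < f τ), div_le_iff₀ (by linarith)]
    nlinarith
  have hv : ∀ᶠ τ in Tfilter d, |h τ / f' τ| ≤ C + K := by
    filter_upwards [hTsum, tf'.eventually_ge_atTop 1] with τ hτ h1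
    have h2 := (hC (-τ) (by simp [hτ])).2.2
    have h3 := (hcmp τ hτ).2.1
    have hC0 : 0 ≤ C := (abs_nonneg _).trans (hC τ hτ).1
    have h4 : ⨆ i, |(-τ) i| = ⨆ i, |τ i| := by simp
    rw [h4] at h2
    rw [abs_div, abs_of_pos (by linarith : 0 < f' τ), div_le_iff₀ (by linarith)]
    simp only [hh, abs_neg]
    nlinarith
  have r1 := full_lim g h f f' K C hK tf tf' hff he (C + K) hu hv
  have r2 := full_lim (fun τ => -g τ) (fun τ => -h τ) f f' K C hK tf tf' hff
    (by filter_upwards [he] with τ hτ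
        rw [← abs_neg] at hτ
        convert hτ using 2
        ring) (C + K)
    (by filter_upwards [hu] with τ hτ
        rwa [neg_div, abs_neg])
    (by filter_upwards [hv] with τ hτ
        rwa [neg_div, abs_neg])
  have e1 : psiLowF d Λ k = liminf (fun τ => g τ / f τ) (Tfilter d) := rfl
  have e2 : psiUpF d Λ k = -liminf (fun τ => -g τ / f τ) (Tfilter d) := by
    rw [← limsup_neg_aux]
    simp only [neg_div, neg_neg]
    rfl
  have e3 : psiUpF d (dualLattice d Λ) (d + 1 - k) = -liminf (fun τ => h τ / f' τ) (Tfilter d) := by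
    rw [← limsup_neg_aux]
    unfold psiUpF
    conv_lhs => rw [← T_neg d]
    rw [← limsup_comp]
    congr 1
    funext τ
    simp [hh, hf', Function.comp, neg_div]
  have e4 : psiLowF d (dualLattice d Λ) (d + 1 - k) = liminf (fun τ => -h τ / f' τ) (Tfilter d) := by
    unfold psiLowF
    conv_lhs => rw [← T_neg d]
    rw [← liminf_comp]
    congr 1
    funext τ
    simp [hh, hf', Function.comp]
  rw [e1, e2, e3, e4]
  simp only [abs_neg, neg_eq_zero, Left.neg_pos_iff, Left.neg_neg_iff]
  refine ⟨r1.1, ?_, r1.2, r2.2⟩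
  rcases r2.1 with h | h | h
  · exact Or.inl h
  · exact Or.inr (Or.inr h)
  · exact Or.inr (Or.inl h)
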